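/- arXiv:2105.03081 — 2 statements merged into one kernel-verified Lean document; each statement's English description precedes it below -/
import Mathlib

section
/- For every state s ∈ S: there exists a policy π with μ^π_s(Safe) = 1 if and only if there exists an action a ∈ A s with Q*(s,a) = 0. -/
open MeasureTheory Set
open scoped ENNReal Classical

variable {S : Type*}

def IsPathMeasure [MeasurableSpace S] (P : S → PMF S) (μ : S → Measure (ℕ → S)) : Prop :=
  (∀ s, IsProbabilityMeasure (μ s)) ∧
    ∀ (s : S) (n : ℕ) (x : ℕ → S),
      μ s {ω | ∀ i ≤ n, ω i = x i} =
        (if x 0 = s then 1 else 0) * ∏ i ∈ Finset.range n, (P (x i)) (x (i + 1))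

noncomputable def Rw (Acc : Set S) (γacc rn : ℝ) (s : S) : ℝ :=
  if s ∈ Acc then (1 - γacc) * rn else 0

noncomputable def Γw (Acc : Set S) (γacc γ : ℝ) (s : S) : ℝ :=
  if s ∈ Acc then γacc else γ

noncomputable def Ret (Acc : Set S) (γacc γ rn : ℝ) (ω : ℕ → S) : ℝ :=
  ∑' t : ℕ, Rw Acc γacc rn (ω (t + 1)) * ∏ k ∈ Finset.range t, Γw Acc γacc γ (ω (k + 1))

noncomputable def Val [MeasurableSpace S] (Acc : Set S) (γacc γ rn : ℝ)
    (μ : S → Measure (ℕ → S)) (s : S) : ℝ :=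
  ∫ ω, Ret Acc γacc γ rn ω ∂ (μ s)

variable {A : S → Type*}

noncomputable def Valp [MeasurableSpace S] (Acc : Set S) (γacc γ rn : ℝ)
    (μ : ((s : S) → A s) → S → Measure (ℕ → S)) (π : (s : S) → A s) (s : S) : ℝ :=
  ∫ ω, Ret Acc γacc γ rn ω ∂ (μ π s)

noncomputable def Qp [MeasurableSpace S] [Fintype S]
    (P : (s : S) → A s → PMF S) (Acc : Set S) (γacc γ rn : ℝ)
    (μ : ((s : S) → A s) → S → Measure (ℕ → S)) (π : (s : S) → A s) (s : S) (a : A s) : ℝ :=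
  ∑ s' : S, (P s a s').toReal *
    (Rw Acc γacc rn s' + Γw Acc γacc γ s' * Valp Acc γacc γ rn μ π s')

noncomputable def Qstar [MeasurableSpace S] [Fintype S]
    (P : (s : S) → A s → PMF S) (Acc : Set S) (γacc γ rn : ℝ)
    (μ : ((s : S) → A s) → S → Measure (ℕ → S)) (s : S) (a : A s) : ℝ :=
  ⨆ π : (s' : S) → A s', Qp P Acc γacc γ rn μ π s a

def WinRegion [MeasurableSpace S] (Acc : Set S)
    (μ : ((s : S) → A s) → S → Measure (ℕ → S)) : Set S :=
  {s | ∃ π : (s' : S) → A s', μ π s {ω | ∀ t, ω t ∉ Acc} = 1}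

def IsOptimal [MeasurableSpace S] (Acc : Set S) (γacc γ rn : ℝ)
    (μ : ((s : S) → A s) → S → Measure (ℕ → S)) (πo : (s : S) → A s) : Prop :=
  ∀ s, Valp Acc γacc γ rn μ πo s = ⨆ π : (s' : S) → A s', Valp Acc γacc γ rn μ π s

/-- A set of states from which the chain with transition function `K` never exits. -/
def IsClosedUnder (K : S → PMF S) (U : Set S) : Prop :=
  ∀ x ∈ U, (K x).support ⊆ U

theorem PMF.exists_path_of_reflTransGen {K : S → PMF S} {s y : S}
    (hy : Relation.ReflTransGen (fun a b => b ∈ (K a).support) s y) :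
    ∃ (n : ℕ) (x : ℕ → S), x 0 = s ∧ x n = y ∧ ∀ i < n, x (i + 1) ∈ (K (x i)).support := by
  induction hy with
  | refl => exact ⟨0, fun _ => s, rfl, rfl, by simp⟩
  | @tail b c _ hbc ih =>
    obtain ⟨n, x, h0, hn, hx⟩ := ih
    refine ⟨n + 1, fun i => if i ≤ n then x i else c, by simpa, by simp, fun i hi => ?_⟩
    rcases Nat.lt_succ_iff_lt_or_eq.1 hi with hi | rfl
    · simpa [hi.le, Nat.succ_le_of_lt hi] using hx i hi
    · simpa [hn] using hbc

namespace IsPathMeasure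

variable [MeasurableSpace S] {K : S → PMF S} {ν : S → Measure (ℕ → S)}

theorem ae_zero_eq [MeasurableSingletonClass S] (h : IsPathMeasure K ν) (s : S) :
    ∀ᵐ ω ∂ν s, ω 0 = s := by
  have := h.1 s
  have hm : Measurable fun ω : ℕ → S => ω 0 = s :=
    (measurableSet_singleton s).mem.comp (measurable_pi_apply 0)
  rw [ae_iff_prob_eq_one hm]
  simpa using h.2 s 0 fun _ => s

theorem ae_forall_mem [Fintype S] (h : IsPathMeasure K ν) {U : Set S}
    (hU : IsClosedUnder K U) {s : S} (hs : s ∈ U) : ∀ᵐ ω ∂ν s, ∀ t, ω t ∈ U := by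
  rw [ae_all_iff]
  intro t
  let e : (Fin (t + 1) → S) → ℕ → S := fun x i => x ⟨min i t, by omega⟩
  have hsub : {ω : ℕ → S | ω t ∉ U} ⊆
      ⋃ x : {x : Fin (t + 1) → S // e x t ∉ U}, {ω | ∀ i ≤ t, ω i = e x i} := by
    intro ω hω
    refine mem_iUnion.2 ⟨⟨fun i => ω i, by simpa [e] using hω⟩, fun i hi => ?_⟩
    simp [e, hi]
  refine measure_mono_null hsub (measure_iUnion_null fun ⟨x, hx⟩ => ?_)
  rw [h.2]
  by_contra hne
  obtain ⟨h0, hprod⟩ := mul_ne_zero_iff.1 hne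
  have h0 : e x 0 = s := by simpa using h0
  have hmem : ∀ i ≤ t, e x i ∈ U := by
    intro i
    induction i with
    | zero => exact fun _ => h0 ▸ hs
    | succ i ih =>
      intro hi
      exact hU _ (ih (by omega)) ((PMF.mem_support_iff _ _).2
        (Finset.prod_ne_zero_iff.1 hprod i (Finset.mem_range.2 hi)))
  exact hx (hmem t le_rfl)

theorem notMem_of_reflTransGen (h : IsPathMeasure K ν) {B : Set S} {s y : S}
    (hs : ∀ᵐ ω ∂ν s, ∀ t, ω t ∉ B)
    (hy : Relation.ReflTransGen (fun a b => b ∈ (K a).support) s y) : y ∉ B := by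
  obtain ⟨n, x, h0, hn, hx⟩ := PMF.exists_path_of_reflTransGen hy
  intro hyB
  have hnull : ν s {ω | ∀ i ≤ n, ω i = x i} = 0 := by
    refine measure_mono_null (fun ω (hω : ∀ i ≤ n, ω i = x i) => ?_) (ae_iff.1 hs)
    exact fun hω' => hω' n (by rw [hω n le_rfl, hn]; exact hyB)
  rw [h.2, if_pos h0, one_mul, Finset.prod_eq_zero_iff] at hnull
  obtain ⟨i, hi, hzero⟩ := hnull
  exact (PMF.mem_support_iff _ _).1 (hx i (Finset.mem_range.1 hi)) hzero

theorem measure_safe_eq_one_iff_ae [MeasurableSingletonClass S] [Fintype S]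
    (h : IsPathMeasure K ν) (B : Set S) (s : S) :
    ν s {ω | ∀ t, ω t ∉ B} = 1 ↔ ∀ᵐ ω ∂ν s, ∀ t, ω t ∉ B := by
  have := h.1 s
  have hm : Measurable fun ω : ℕ → S => ∀ t, ω t ∉ B :=
    .forall fun t => B.toFinite.measurableSet.compl.mem.comp (measurable_pi_apply t)
  exact (ae_iff_prob_eq_one hm).symm

theorem ae_safe_iff_exists_isClosedUnder [Fintype S] (h : IsPathMeasure K ν)
    (B : Set S) (s : S) :
    (∀ᵐ ω ∂ν s, ∀ t, ω t ∉ B) ↔ ∃ U, s ∈ U ∧ IsClosedUnder K U ∧ Disjoint U B := by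
  constructor
  · intro hs
    refine ⟨{y | Relation.ReflTransGen (fun a b => b ∈ (K a).support) s y}, .refl,
      fun x hx y hy => hx.tail hy, ?_⟩
    exact Set.disjoint_left.2 fun y hy => h.notMem_of_reflTransGen hs hy
  · rintro ⟨U, hs, hU, hd⟩
    filter_upwards [h.ae_forall_mem hU hs] with ω hω t
    exact Set.disjoint_left.1 hd (hω t)

end IsPathMeasure

section Return

variable {Acc : Set S} {rn γ γacc : ℝ}

theorem Rw_nonpos (hrn : rn < 0) (hγacc : γacc < 1) (x : S) : Rw Acc γacc rn x ≤ 0 := by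
  unfold Rw
  split_ifs
  · exact mul_nonpos_of_nonneg_of_nonpos (by linarith) hrn.le
  · rfl

theorem Rw_neg (hrn : rn < 0) (hγacc : γacc < 1) {x : S} (hx : x ∈ Acc) :
    Rw Acc γacc rn x < 0 := by
  rw [Rw, if_pos hx]
  exact mul_neg_of_pos_of_neg (by linarith) hrn

theorem Γw_pos (hγ : 0 < γ) (hγacc : 0 < γacc) (x : S) : 0 < Γw Acc γacc γ x := by
  unfold Γw
  split_ifs <;> assumption

theorem Γw_le_max (x : S) : Γw Acc γacc γ x ≤ max γ γacc := by
  unfold Γw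
  split_ifs <;> simp

theorem norm_Ret_term_le (hγ : 0 < γ) (hγacc : 0 < γacc ∧ γacc < 1) (ω : ℕ → S) (t : ℕ) :
    ‖Rw Acc γacc rn (ω (t + 1)) * ∏ k ∈ Finset.range t, Γw Acc γacc γ (ω (k + 1))‖ ≤
      |rn| * max γ γacc ^ t := by
  rw [norm_mul]
  have hR : ‖Rw Acc γacc rn (ω (t + 1))‖ ≤ |rn| := by
    unfold Rw
    split_ifs
    · rw [norm_mul, Real.norm_of_nonneg (by linarith)]
      exact mul_le_of_le_one_left (abs_nonneg _) (by linarith)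
    · simp
  have hnn : 0 ≤ ∏ k ∈ Finset.range t, Γw Acc γacc γ (ω (k + 1)) :=
    Finset.prod_nonneg fun k _ => (Γw_pos hγ hγacc.1 _).le
  have hP : ∏ k ∈ Finset.range t, Γw Acc γacc γ (ω (k + 1)) ≤ max γ γacc ^ t := by
    simpa using Finset.prod_le_prod (s := Finset.range t)
      (fun k _ => (Γw_pos hγ hγacc.1 (ω (k + 1))).le)
      (fun k _ => Γw_le_max (Acc := Acc) (γ := γ) (γacc := γacc) (ω (k + 1)))
  rw [Real.norm_of_nonneg hnn]
  exact mul_le_mul hR hP hnn (abs_nonneg _)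

theorem summable_Ret_bound (hγ : 0 < γ ∧ γ < 1) (hγacc : γacc < 1) :
    Summable fun t : ℕ => |rn| * max γ γacc ^ t :=
  (summable_geometric_of_lt_one (le_max_of_le_left hγ.1.le) (max_lt hγ.2 hγacc)).mul_left _

theorem summable_Ret (hγ : 0 < γ ∧ γ < 1) (hγacc : 0 < γacc ∧ γacc < 1) (ω : ℕ → S) :
    Summable fun t : ℕ =>
      Rw Acc γacc rn (ω (t + 1)) * ∏ k ∈ Finset.range t, Γw Acc γacc γ (ω (k + 1)) :=
  .of_norm_bounded (summable_Ret_bound hγ hγacc.2) (norm_Ret_term_le hγ.1 hγacc ω)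

theorem Ret_nonpos (hrn : rn < 0) (hγ : 0 < γ) (hγacc : 0 < γacc ∧ γacc < 1) (ω : ℕ → S) :
    Ret Acc γacc γ rn ω ≤ 0 :=
  tsum_nonpos fun _ => mul_nonpos_of_nonpos_of_nonneg (Rw_nonpos hrn hγacc.2 _)
    (Finset.prod_nonneg fun _ _ => (Γw_pos hγ hγacc.1 _).le)

theorem Ret_eq_zero_iff (hrn : rn < 0) (hγ : 0 < γ ∧ γ < 1) (hγacc : 0 < γacc ∧ γacc < 1)
    (ω : ℕ → S) : Ret Acc γacc γ rn ω = 0 ↔ ∀ t, ω (t + 1) ∉ Acc := by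
  constructor
  · intro h t ht
    have hneg := Summable.tsum_lt_tsum (g := fun _ => (0 : ℝ)) (i := t)
      (f := fun t => Rw Acc γacc rn (ω (t + 1)) *
        ∏ k ∈ Finset.range t, Γw Acc γacc γ (ω (k + 1)))
      (fun i => mul_nonpos_of_nonpos_of_nonneg (Rw_nonpos hrn hγacc.2 _)
        (Finset.prod_nonneg fun _ _ => (Γw_pos hγ.1 hγacc.1 _).le))
      (mul_neg_of_neg_of_pos (Rw_neg hrn hγacc.2 ht)
        (Finset.prod_pos fun _ _ => Γw_pos hγ.1 hγacc.1 _))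
      (summable_Ret hγ hγacc ω) summable_zero
    rw [tsum_zero] at hneg
    exact hneg.ne h
  · intro h
    simp [Ret, Rw, h]

theorem integrable_Ret [Fintype S] [MeasurableSpace S] [MeasurableSingletonClass S]
    (hγ : 0 < γ ∧ γ < 1) (hγacc : 0 < γacc ∧ γacc < 1)
    (ν : Measure (ℕ → S)) [IsFiniteMeasure ν] : Integrable (Ret Acc γacc γ rn) ν := by
  have hmeas : Measurable (Ret Acc γacc γ rn) := by
    have hR : Measurable (Rw Acc γacc rn) := measurable_of_finite _
    have hΓ : Measurable (Γw Acc γacc γ) := measurable_of_finite _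
    have hpartial (n : ℕ) : Measurable fun ω : ℕ → S => ∑ t ∈ Finset.range n,
        Rw Acc γacc rn (ω (t + 1)) * ∏ k ∈ Finset.range t, Γw Acc γacc γ (ω (k + 1)) :=
      Finset.measurable_fun_sum _ fun t _ => (hR.comp (measurable_pi_apply (t + 1))).mul
        (Finset.measurable_fun_prod _ fun k _ => hΓ.comp (measurable_pi_apply (k + 1)))
    refine measurable_of_tendsto_metrizable hpartial (tendsto_pi_nhds.2 fun ω => ?_)
    exact (summable_Ret (Acc := Acc) (rn := rn) hγ hγacc ω).hasSum.tendsto_sum_nat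
  refine .of_bound hmeas.aestronglyMeasurable (∑' t : ℕ, |rn| * max γ γacc ^ t)
    (.of_forall fun ω => ?_)
  exact tsum_of_norm_bounded (summable_Ret_bound hγ hγacc.2).hasSum
    (norm_Ret_term_le hγ.1 hγacc ω)

end Return

section Value

variable [MeasurableSpace S]
  {P : (s : S) → A s → PMF S} {Acc : Set S}
  {μ : ((s : S) → A s) → S → Measure (ℕ → S)} {rn γ γacc : ℝ}

theorem Valp_nonpos (hrn : rn < 0) (hγ : 0 < γ) (hγacc : 0 < γacc ∧ γacc < 1)
    (π : (s : S) → A s) (s : S) : Valp Acc γacc γ rn μ π s ≤ 0 :=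
  integral_nonpos fun ω => Ret_nonpos hrn hγ hγacc ω

theorem Valp_eq_zero_iff [Fintype S] [MeasurableSingletonClass S] {π : (s : S) → A s}
    (hμ : IsPathMeasure (fun s => P s (π s)) (μ π))
    (hrn : rn < 0) (hγ : 0 < γ ∧ γ < 1) (hγacc : 0 < γacc ∧ γacc < 1)
    {s : S} (hs : s ∉ Acc) :
    Valp Acc γacc γ rn μ π s = 0 ↔ ∀ᵐ ω ∂μ π s, ∀ t, ω t ∉ Acc := by
  have := hμ.1 s
  have hint : Valp Acc γacc γ rn μ π s = 0 ↔ ∀ᵐ ω ∂μ π s, Ret Acc γacc γ rn ω = 0 := by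
    have h := integral_eq_zero_iff_of_nonneg (μ := μ π s) (f := -Ret Acc γacc γ rn)
      (fun ω => neg_nonneg.2 (Ret_nonpos hrn hγ.1 hγacc ω)) (integrable_Ret hγ hγacc _).neg
    simpa [Valp, integral_neg, Filter.EventuallyEq] using h
  simp_rw [hint, Ret_eq_zero_iff hrn hγ hγacc]
  constructor
  · intro h
    filter_upwards [h, hμ.ae_zero_eq s] with ω hω h0 t
    cases t with
    | zero => exact h0 ▸ hs
    | succ t => exact hω t
  · intro h
    filter_upwards [h] with ω hω t using hω (t + 1)

theorem Qp_term_nonpos (hrn : rn < 0) (hγ : 0 < γ) (hγacc : 0 < γacc ∧ γacc < 1)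
    (π : (s : S) → A s) (s : S) :
    Rw Acc γacc rn s + Γw Acc γacc γ s * Valp Acc γacc γ rn μ π s ≤ 0 :=
  add_nonpos (Rw_nonpos hrn hγacc.2 s)
    (mul_nonpos_of_nonneg_of_nonpos (Γw_pos hγ hγacc.1 s).le (Valp_nonpos hrn hγ hγacc π s))

theorem Qp_nonpos [Fintype S] (hrn : rn < 0) (hγ : 0 < γ) (hγacc : 0 < γacc ∧ γacc < 1)
    (π : (s : S) → A s) (s : S) (a : A s) : Qp P Acc γacc γ rn μ π s a ≤ 0 :=
  Finset.sum_nonpos fun s' _ => mul_nonpos_of_nonneg_of_nonpos ENNReal.toReal_nonneg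
    (Qp_term_nonpos hrn hγ hγacc π s')

theorem Qp_eq_zero_iff [Fintype S] [MeasurableSingletonClass S] {π : (s : S) → A s}
    (hμ : IsPathMeasure (fun s => P s (π s)) (μ π))
    (hrn : rn < 0) (hγ : 0 < γ ∧ γ < 1) (hγacc : 0 < γacc ∧ γacc < 1) (s : S) (a : A s) :
    Qp P Acc γacc γ rn μ π s a = 0 ↔
      ∀ s' ∈ (P s a).support, ∀ᵐ ω ∂μ π s', ∀ t, ω t ∉ Acc := by
  rw [Qp, Finset.sum_eq_zero_iff_of_nonpos fun s' _ => mul_nonpos_of_nonneg_of_nonpos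
    ENNReal.toReal_nonneg (Qp_term_nonpos hrn hγ.1 hγacc π s')]
  refine forall_congr' fun s' => ?_
  have hp : (P s a s').toReal = 0 ↔ s' ∉ (P s a).support := by
    rw [ENNReal.toReal_eq_zero_iff, PMF.mem_support_iff, not_not,
      or_iff_left ((P s a).apply_ne_top s')]
  rw [mul_eq_zero, hp]
  have hV := Valp_nonpos (Acc := Acc) (μ := μ) hrn hγ.1 hγacc π s'
  have hΓ := Γw_pos (Acc := Acc) hγ.1 hγacc.1 s'
  have key : Rw Acc γacc rn s' + Γw Acc γacc γ s' * Valp Acc γacc γ rn μ π s' = 0 ↔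
      ∀ᵐ ω ∂μ π s', ∀ t, ω t ∉ Acc := by
    by_cases hs' : s' ∈ Acc
    · have hR := Rw_neg hrn hγacc.2 hs'
      refine iff_of_false (by nlinarith) fun h => ?_
      exact hμ.notMem_of_reflTransGen h .refl hs'
    · rw [← Valp_eq_zero_iff hμ hrn hγ hγacc hs', Rw, if_neg hs', zero_add, mul_eq_zero,
        or_iff_right hΓ.ne']
  rw [key, ← imp_iff_not_or]
  simp

theorem Qstar_eq_zero_iff [Fintype S] [∀ s, Fintype (A s)] [∀ s, Nonempty (A s)]
    (hrn : rn < 0) (hγ : 0 < γ) (hγacc : 0 < γacc ∧ γacc < 1) (s : S) (a : A s) :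
    Qstar P Acc γacc γ rn μ s a = 0 ↔
      ∃ π : (s : S) → A s, Qp P Acc γacc γ rn μ π s a = 0 := by
  constructor
  · intro h
    obtain ⟨π, hπ⟩ := exists_eq_ciSup_of_finite (f := fun π => Qp P Acc γacc γ rn μ π s a)
    exact ⟨π, hπ.trans h⟩
  · rintro ⟨π, hπ⟩
    refine le_antisymm (ciSup_le fun π' => Qp_nonpos hrn hγ hγacc π' s a) ?_
    exact hπ.symm.le.trans
      (le_ciSup (f := fun π => Qp P Acc γacc γ rn μ π s a) (Set.finite_range _).bddAbove π)

end Value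

/-- there is a policy that is almost surely safe from `s` iff some action
`a` at `s` has optimal state-action value `Q*(s,a) = 0`. -/
theorem exists_safe_policy_iff_exists_Qstar_zero
    [Fintype S] [Nonempty S] [MeasurableSpace S] [MeasurableSingletonClass S]
    [∀ s, Fintype (A s)] [∀ s, Nonempty (A s)]
    (P : (s : S) → A s → PMF S) (Acc : Set S)
    (habs : ∀ s ∈ Acc, ∀ a : A s, (P s a).support ⊆ Acc)
    (μ : ((s : S) → A s) → S → Measure (ℕ → S))
    (hμ : ∀ π : (s : S) → A s, IsPathMeasure (fun s => P s (π s)) (μ π))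
    (rn γ γacc : ℝ) (hrn : rn < 0) (hγ : 0 < γ ∧ γ < 1) (hγacc : 0 < γacc ∧ γacc < 1)
    (s : S) :
    (∃ π : (s : S) → A s, μ π s {ω | ∀ t, ω t ∉ Acc} = 1) ↔
      ∃ a : A s, Qstar P Acc γacc γ rn μ s a = 0 := by
  rw [exists_congr fun π => (hμ π).measure_safe_eq_one_iff_ae Acc s,
    exists_congr fun a => (Qstar_eq_zero_iff hrn hγ.1 hγacc s a).trans
      (exists_congr fun π => Qp_eq_zero_iff (hμ π) hrn hγ hγacc s a)]
  constructor
  · rintro ⟨π, hπ⟩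
    obtain ⟨U, hs, hU, hd⟩ := ((hμ π).ae_safe_iff_exists_isClosedUnder Acc s).1 hπ
    exact ⟨π s, π, fun s' hs' =>
      ((hμ π).ae_safe_iff_exists_isClosedUnder Acc s').2 ⟨U, hU s hs hs', hU, hd⟩⟩
  · rintro ⟨a, π, h⟩
    let V : Set S := {y | ∀ᵐ ω ∂μ π y, ∀ t, ω t ∉ Acc}
    have hVAcc : ∀ y ∈ V, y ∉ Acc := fun y hy => (hμ π).notMem_of_reflTransGen hy .refl
    have hsAcc : s ∉ Acc := fun hs => by
      obtain ⟨s', hs'⟩ := (P s a).support_nonempty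
      exact hVAcc s' (h s' hs') (habs s hs a hs')
    refine ⟨Function.update π s a,
      ((hμ _).ae_safe_iff_exists_isClosedUnder Acc s).2 ⟨insert s V, mem_insert _ _, ?_, ?_⟩⟩
    · intro x hx y hy
      refine mem_insert_of_mem _ ?_
      by_cases hxs : x = s
      · subst hxs
        exact h y (by simpa using hy)
      · have hxV : x ∈ V := mem_of_mem_insert_of_ne hx hxs
        obtain ⟨U, hxU, hU, hd⟩ := ((hμ π).ae_safe_iff_exists_isClosedUnder Acc x).1 hxV
        simp only [Function.update_of_ne hxs] at hy
        exact ((hμ π).ae_safe_iff_exists_isClosedUnder Acc y).2 ⟨U, hU x hxU hy, hU, hd⟩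
    · exact Set.disjoint_left.2 (forall_mem_insert.2 ⟨hsAcc, hVAcc⟩)
end

section
/- Let S be a finite type, for each s ∈ S let A s be a nonempty finite set of actions, and let α ∈ (0,1). Let (Q^k)_{k∈ℕ} be any sequence of functions on pairs {(s,a) : s ∈ S, a ∈ A s} such that Q^0(s,a) ≤ 0 for all pairs, and for every k, Q^{k+1} is obtained from Q^k by updating an arbitrary set of pairs, where each updated pair (s,a) receives the value Q^{k+1}(s,a) = (1 − α)·Q^k(s,a) + α·(r + g·max_{a' ∈ A s'} Q^k(s',a')) for some s' ∈ S, some r ≤ 0, and some g ∈ [0,1], while all other pairs keep their value. Then: (i) Q^k(s,a) ≤ 0 for every k and every pair (s,a); and (ii) if Q^{k'}(s,a) < 0 for some k', then Q^k(s,a) < 0 for every k ≥ k'. Consequently, the sets W^k_p = {(s,a) : Q^k(s,a) = 0} and W^k = {s : ∃ a ∈ A s, Q^k(s,a) = 0} are monotonically nonincreasing in k. -/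
/-- for asynchronous Q-learning updates with constant learning rate
`α ∈ (0,1)`, nonpositive rewards and discounts in `[0,1]`, the iterates stay
nonpositive, a value once negative stays negative, and the estimated winning pair set
and estimated winning region are monotonically nonincreasing. -/
theorem qlearning_nonpos_and_monotone
    {S : Type*} [Fintype S] {A : S → Type*} [∀ s, Fintype (A s)] [∀ s, Nonempty (A s)]
    (α : ℝ) (hα : 0 < α ∧ α < 1)
    (Q : ℕ → (s : S) → A s → ℝ)
    (h0 : ∀ (s : S) (a : A s), Q 0 s a ≤ 0)
    (hupd : ∀ (k : ℕ) (s : S) (a : A s),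
      Q (k + 1) s a = Q k s a ∨
        ∃ (s' : S) (r g : ℝ), r ≤ 0 ∧ 0 ≤ g ∧ g ≤ 1 ∧
          Q (k + 1) s a = (1 - α) * Q k s a + α * (r + g * (⨆ a' : A s', Q k s' a'))) :
    (∀ (k : ℕ) (s : S) (a : A s), Q k s a ≤ 0) ∧
      (∀ (k' k : ℕ) (s : S) (a : A s), k' ≤ k → Q k' s a < 0 → Q k s a < 0) ∧
      (∀ k : ℕ, {p : Σ s : S, A s | Q (k + 1) p.1 p.2 = 0} ⊆
        {p : Σ s : S, A s | Q k p.1 p.2 = 0}) ∧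
      (∀ k : ℕ, {s : S | ∃ a : A s, Q (k + 1) s a = 0} ⊆
        {s : S | ∃ a : A s, Q k s a = 0}) := by
  obtain ⟨hα0, hα1⟩ := hα
  have target_nonpos : ∀ k, (∀ s a, Q k s a ≤ 0) → ∀ (s' : S) (r g : ℝ), r ≤ 0 → 0 ≤ g →
      α * (r + g * (⨆ a' : A s', Q k s' a')) ≤ 0 := fun k hk s' r g hr hg =>
    mul_nonpos_of_nonneg_of_nonpos hα0.le
      (add_nonpos hr (mul_nonpos_of_nonneg_of_nonpos hg (ciSup_le (hk s'))))
  have nonpos : ∀ k s a, Q k s a ≤ 0 := by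
    intro k
    induction k with
    | zero => exact h0
    | succ k ih =>
      intro s a
      rcases hupd k s a with h | ⟨s', r, g, hr, hg, -, h⟩
      · exact h.trans_le (ih s a)
      · rw [h]
        exact add_nonpos (mul_nonpos_of_nonneg_of_nonpos (sub_nonneg.2 hα1.le) (ih s a))
          (target_nonpos k ih s' r g hr hg)
  have neg_succ : ∀ k s a, Q k s a < 0 → Q (k + 1) s a < 0 := by
    intro k s a hneg
    rcases hupd k s a with h | ⟨s', r, g, hr, hg, -, h⟩
    · exact h.trans_lt hneg
    · rw [h]
      exact add_neg_of_neg_of_nonpos (mul_neg_of_pos_of_neg (sub_pos.2 hα1) hneg)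
        (target_nonpos k (nonpos k) s' r g hr hg)
  have zero_of_succ : ∀ k s a, Q (k + 1) s a = 0 → Q k s a = 0 := fun k s a h =>
    (nonpos k s a).eq_of_not_lt fun hneg => (neg_succ k s a hneg).ne h
  refine ⟨nonpos, fun k' k s a hk hneg => ?_, fun k p hp => zero_of_succ k p.1 p.2 hp,
    fun k s ⟨a, ha⟩ => ⟨a, zero_of_succ k s a ha⟩⟩
  induction hk with
  | refl => exact hneg
  | step _ ih => exact neg_succ _ s a ih
end
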